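/- Let G be a finite r-regular graph with girth at least 5, equipped with a random label assignment with probabilities (p₀,p). Then for any vertex u and any neighbour v of u: w₀ = P(u∈W₀) = (1−p₀)^{r+1}; b₀ = P(u∈B₀) = r·p₀·(1−p₀)^r; q₀ = P(u∈W₀ ∧ v∈W₀) = (1−p₀)^{2r}; s₀ = P(u∈B₀ ∧ v∈W₀) = (r−1)·p₀·(1−p₀)^{2r−1}; and t₀ = P(u∈B₀ ∧ v∈B₀) = (r−1)²·p₀²·(1−p₀)^{2r−2}. -/

import Mathlib

open MeasureTheory ProbabilityTheory Filter Set

namespace InducedForest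

variable {V : Type*}

/-- Label `i` is *relevant* for vertex `v` (w.r.t. the label assignment `S`):
either `i = 0` and `0 ∈ S v`, or `i ∈ S v`, no `j < i` is relevant for `v`, and
there is a unique neighbour of `v` having a relevant label strictly smaller than `i`. -/
def Relevant (G : SimpleGraph V) (S : V → Set ℕ) (i : ℕ) : V → Prop :=
  Nat.strongRecOn i (fun i ih v =>
    (i = 0 ∧ 0 ∈ S v) ∨
    (i ∈ S v ∧ (∀ j, (h : j < i) → ¬ ih j h v) ∧
      (∃! u, G.Adj v u ∧ ∃ j, ∃ h : j < i, ih j h u)))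

/-- `v` has some relevant label `≤ l`, i.e. `v ∈ R_{≤ l}`. -/
def RelevantLe (G : SimpleGraph V) (S : V → Set ℕ) (l : ℕ) (v : V) : Prop :=
  ∃ i ≤ l, Relevant G S i v

inductive Colour | white | blue | orange | purple
deriving DecidableEq

open Classical in
/-- The colour of `u` at time `l`. -/
noncomputable def colourAt (G : SimpleGraph V) (S : V → Set ℕ) (l : ℕ) (u : V) : Colour :=
  if RelevantLe G S l u then Colour.purple
  else if ∀ v, G.Adj u v → ¬ RelevantLe G S l v then Colour.white
  else if ∃! v, G.Adj u v ∧ RelevantLe G S l v then Colour.blue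
  else Colour.orange

/-- The set `W_l` of white vertices at time `l`. -/
def White (G : SimpleGraph V) (S : V → Set ℕ) (l : ℕ) : Set V :=
  {u | ¬ RelevantLe G S l u ∧ ∀ v, G.Adj u v → ¬ RelevantLe G S l v}

/-- The set `B_l` of blue vertices at time `l`. -/
def Blue (G : SimpleGraph V) (S : V → Set ℕ) (l : ℕ) : Set V :=
  {u | ¬ RelevantLe G S l u ∧ ∃! v, G.Adj u v ∧ RelevantLe G S l v}
/-- The label assignment determined by a sample point `ω`. -/
def labels (ω : V → ℕ → Bool) : V → Set ℕ := fun v => {i | ω v i = true}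

/-- `μ` is the random label assignment with probabilities `(p₀, p)`: the events
`i ∈ S(v)` are mutually independent, and each has probability `p₀` if `i = 0`
and `p` if `i ≥ 1`. -/
def IsLabelMeasure (μ : Measure (V → ℕ → Bool)) (p₀ p : ℝ) : Prop :=
  IsProbabilityMeasure μ ∧
  iIndepSet (fun q : V × ℕ => {ω : V → ℕ → Bool | ω q.1 q.2 = true}) μ ∧
  ∀ (v : V) (i : ℕ), μ {ω | ω v i = true} = ENNReal.ofReal (if i = 0 then p₀ else p)

/-- Event that `u` is white at time `l`. -/
def WEv (G : SimpleGraph V) (l : ℕ) (u : V) : Set (V → ℕ → Bool) :=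
  {ω | u ∈ White G (labels ω) l}

/-- Event that `u` is blue at time `l`. -/
def BEv (G : SimpleGraph V) (l : ℕ) (u : V) : Set (V → ℕ → Bool) :=
  {ω | u ∈ Blue G (labels ω) l}

/-- Event that `u` has relevant label `i`, i.e. `u ∈ R_i`. -/
def REv (G : SimpleGraph V) (i : ℕ) (u : V) : Set (V → ℕ → Bool) :=
  {ω | Relevant G (labels ω) i u}

/-- Event that `u` has a relevant label `≤ l`, i.e. `u ∈ R_{≤ l}`. -/
def RLeEv (G : SimpleGraph V) (l : ℕ) (u : V) : Set (V → ℕ → Bool) :=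
  {ω | RelevantLe G (labels ω) l u}

/-- `G` is `r`-regular. -/
def IsRegular (G : SimpleGraph V) (r : ℕ) : Prop :=
  ∀ v : V, (G.neighborSet v).ncard = r


open Classical in
lemma atom_meas {V : Type*} {μ : Measure (V → ℕ → Bool)} {p₀ p : ℝ} (hp₀ : p₀ ∈ Ioo (0 : ℝ) 1)
    (hμ : IsLabelMeasure μ p₀ p) (U A : Finset V) (hA : A ⊆ U) :
    MeasurableSet {ω : V → ℕ → Bool | ∀ x ∈ U, (ω x 0 = true ↔ x ∈ A)} ∧
    μ.real {ω : V → ℕ → Bool | ∀ x ∈ U, (ω x 0 = true ↔ x ∈ A)}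
      = p₀ ^ A.card * (1 - p₀) ^ (U.card - A.card) := by
  obtain ⟨hprob, hind, hm⟩ := hμ
  have hms : ∀ x : V, MeasurableSet {ω : V → ℕ → Bool | ω x 0 = true} := by
    intro x
    have : Measurable (fun ω : V → ℕ → Bool => ω x 0) := by fun_prop
    exact this (measurableSet_singleton true)
  let f : V → Set (V → ℕ → Bool) := fun x =>
    if x ∈ A then {ω | ω x 0 = true} else {ω | ω x 0 = true}ᶜ
  have hfm : ∀ x, MeasurableSet (f x) := by
    intro x
    by_cases hx : x ∈ A
    · simpa [f, hx] using hms x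
    · simpa only [f, hx, if_false] using (hms x).compl
  have heq : {ω : V → ℕ → Bool | ∀ x ∈ U, (ω x 0 = true ↔ x ∈ A)} = ⋂ x ∈ U, f x := by
    ext ω
    simp only [Set.mem_ofPred_eq, Set.mem_iInter, f]
    refine forall₂_congr fun x _ => ?_
    by_cases hx : x ∈ A <;> simp [hx]
  have hinj : Function.Injective (fun x : V => (x, (0 : ℕ))) := fun a b h => by simpa using h
  have hind' := iIndep.precomp hinj hind
  have hprod := hind'.meas_biInter (S := U) (s := f) (fun x _ => by
    have h0 : MeasurableSet[MeasurableSpace.generateFrom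
        {{ω : V → ℕ → Bool | ω x 0 = true}}] {ω : V → ℕ → Bool | ω x 0 = true} :=
      MeasurableSpace.measurableSet_generateFrom rfl
    by_cases hx : x ∈ A
    · simp only [f, hx, if_true]; exact h0
    · simp only [f, hx, if_false]; exact h0.compl)
  have h1 : ∀ x, μ.real {ω : V → ℕ → Bool | ω x 0 = true} = p₀ := by
    intro x
    simp [Measure.real, hm, hp₀.1.le]
  have hv : ∀ x, (μ (f x)).toReal = if x ∈ A then p₀ else 1 - p₀ := by
    intro x
    by_cases hx : x ∈ A
    · simp only [f, hx, if_true]; exact h1 x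
    · simp only [f, hx, if_false]
      rw [← h1 x]
      exact probReal_compl_eq_one_sub (hms x)
  refine ⟨?_, ?_⟩
  · rw [heq]; exact Finset.measurableSet_biInter _ fun x _ => hfm x
  · rw [heq, Measure.real, hprod, ENNReal.toReal_prod]
    simp only [hv]
    rw [Finset.prod_ite, Finset.prod_const, Finset.prod_const, Finset.filter_mem_eq_inter,
      Finset.inter_eq_right.2 hA, Finset.filter_notMem_eq_sdiff, Finset.card_sdiff_of_subset hA]

open Classical in
lemma family_meas {V : Type*} {μ : Measure (V → ℕ → Bool)} {p₀ p : ℝ} (hp₀ : p₀ ∈ Ioo (0 : ℝ) 1)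
    (hμ : IsLabelMeasure μ p₀ p) (U : Finset V) {ι : Type*} (I : Finset ι) (F : ι → Finset V)
    (hF : Set.InjOn F I) (hU : ∀ i ∈ I, F i ⊆ U) (k : ℕ) (hk : ∀ i ∈ I, (F i).card = k)
    (E : Set (V → ℕ → Bool))
    (hE : ∀ ω, ω ∈ E ↔ ∃ i ∈ I, ∀ x ∈ U, (ω x 0 = true ↔ x ∈ F i)) :
    (μ E).toReal = I.card * (p₀ ^ k * (1 - p₀) ^ (U.card - k)) := by
  have hprob := hμ.1
  have : E = ⋃ i ∈ I, {ω : V → ℕ → Bool | ∀ x ∈ U, (ω x 0 = true ↔ x ∈ F i)} := by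
    ext ω; simp [hE]
  rw [this]
  change μ.real _ = _
  rw [measureReal_biUnion_finset, Finset.sum_congr rfl
    (fun i hi => (atom_meas hp₀ hμ U (F i) (hU i hi)).2),
    Finset.sum_congr rfl (fun i hi => by rw [hk i hi]), Finset.sum_const, nsmul_eq_mul]
  · intro i hi j hj hij
    refine Set.disjoint_left.2 fun ω h1 h2 => hij (hF hi hj ?_)
    ext x
    by_cases hx : x ∈ U
    · exact (h1 x hx).symm.trans (h2 x hx)
    · exact ⟨fun h => (hx (hU i hi h)).elim, fun h => (hx (hU j hj h)).elim⟩
  · exact fun i hi => (atom_meas hp₀ hμ U (F i) (hU i hi)).1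

lemma relevantLe_zero {V : Type*} (G : SimpleGraph V) (ω : V → ℕ → Bool) (v : V) :
    RelevantLe G (labels ω) 0 v ↔ ω v 0 = true := by
  unfold RelevantLe Relevant labels
  constructor
  · rintro ⟨i, hi, h⟩
    obtain rfl : i = 0 := by omega
    rw [Nat.strongRecOn_eq] at h
    rcases h with h | h
    · exact h.2
    · exact h.1
  · intro h
    refine ⟨0, le_rfl, ?_⟩
    rw [Nat.strongRecOn_eq]
    exact Or.inl ⟨rfl, h⟩

lemma no_triangle {V : Type*} (G : SimpleGraph V) (hg : (5 : ℕ∞) ≤ G.egirth) (u v x : V)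
    (huv : G.Adj u v) (hux : G.Adj u x) (hvx : G.Adj v x) : False := by
  let w : G.Walk u u := .cons huv (.cons hvx (.cons hux.symm .nil))
  have hw : w.IsCycle := by
    simp [w, SimpleGraph.Walk.cons_isCycle_iff, huv.ne, huv.ne', hux.ne, hux.ne', hvx.ne, hvx.ne']
  have := SimpleGraph.le_egirth.1 hg u w hw
  simp [w] at this
  revert this
  norm_num

/-- The initial values `w₀, b₀, q₀, s₀, t₀` in an `r`-regular graph of
girth at least 5. -/
theorem initial_values
    [Fintype V] (r : ℕ) (G : SimpleGraph V)
    (hreg : IsRegular G r) (hg : (5 : ℕ∞) ≤ G.egirth)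
    (p₀ p : ℝ) (hp₀ : p₀ ∈ Ioo (0 : ℝ) 1) (hp : p ∈ Ioo (0 : ℝ) 1)
    (μ : Measure (V → ℕ → Bool)) (hμ : IsLabelMeasure μ p₀ p)
    (u v : V) (huv : G.Adj u v) :
    (μ (WEv G 0 u)).toReal = (1 - p₀) ^ (r + 1) ∧
    (μ (BEv G 0 u)).toReal = r * p₀ * (1 - p₀) ^ r ∧
    (μ (WEv G 0 u ∩ WEv G 0 v)).toReal = (1 - p₀) ^ (2 * r) ∧
    (μ (BEv G 0 u ∩ WEv G 0 v)).toReal = ((r : ℝ) - 1) * p₀ * (1 - p₀) ^ (2 * r - 1) ∧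
    (μ (BEv G 0 u ∩ BEv G 0 v)).toReal
      = ((r : ℝ) - 1) ^ 2 * p₀ ^ 2 * (1 - p₀) ^ (2 * r - 2) := by
  classical
  let N : V → Finset V := fun a => Finset.univ.filter (G.Adj a)
  have hN : ∀ a b, b ∈ N a ↔ G.Adj a b := fun a b => by simp [N]
  have hNc : ∀ a, (N a).card = r := by
    intro a
    rw [← hreg a, ← Set.ncard_coe_finset]
    congr 1
    ext b; simp [hN]
  have hdisj : Disjoint (N u) (N v) := by
    rw [Finset.disjoint_left]
    intro x hx hy
    exact no_triangle G hg u v x huv ((hN _ _).1 hx) ((hN _ _).1 hy)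
  have hUc : (N u ∪ N v).card = 2 * r := by
    rw [Finset.card_union_of_disjoint hdisj, hNc, hNc]; ring
  have hu1 : u ∉ N u := by simp [hN]
  have hv1 : v ∉ N v := by simp [hN]
  have huNv : u ∈ N v := (hN _ _).2 huv.symm
  have hvNu : v ∈ N u := (hN _ _).2 huv
  have hIc : (insert u (N u)).card = r + 1 := by
    rw [Finset.card_insert_of_notMem hu1, hNc]
  have hr : 1 ≤ r := by rw [← hNc u]; exact Finset.card_pos.2 ⟨v, hvNu⟩
  have hW : ∀ a ω, ω ∈ WEv G 0 a ↔ ω a 0 ≠ true ∧ ∀ b ∈ N a, ω b 0 ≠ true := by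
    intro a ω
    simp only [WEv, White, Set.mem_ofPred_eq, relevantLe_zero, hN, ne_eq]
  have hB : ∀ a ω, ω ∈ BEv G 0 a ↔ ω a 0 ≠ true ∧ ∃ x ∈ N a, ∀ b ∈ N a, (ω b 0 = true ↔ b = x) := by
    intro a ω
    simp only [BEv, Blue, Set.mem_ofPred_eq, relevantLe_zero, hN, ne_eq]
    refine and_congr_right fun _ => ?_
    constructor
    · rintro ⟨x, ⟨h1, h2⟩, h3⟩
      exact ⟨x, h1, fun b hb => ⟨fun h => h3 b ⟨hb, h⟩, fun h => h ▸ h2⟩⟩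
    · rintro ⟨x, h1, h2⟩
      exact ⟨x, ⟨h1, (h2 x h1).2 rfl⟩, fun b hb => (h2 b hb.1).1 hb.2⟩
  clear_value N
  refine ⟨?_, ?_, ?_, ?_, ?_⟩
  · rw [family_meas hp₀ hμ (insert u (N u)) {()} (fun _ => ∅) (by simp) (by simp) 0 (by simp)]
    · simp [hIc]
    · intro ω
      rw [hW]
      simp
  · rw [family_meas hp₀ hμ (insert u (N u)) (N u) (fun x => {x}) (by simp) ?_ 1 (by simp)]
    · simp only [hIc, hNc, Nat.add_sub_cancel]; ring
    · intro ω
      rw [hB]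
      simp only [Finset.mem_singleton, Finset.forall_mem_insert]
      constructor
      · rintro ⟨h0, x, hx, h⟩
        refine ⟨x, hx, ⟨fun h' => (h0 h').elim, ?_⟩, h⟩
        intro hux; exact (hu1 (hux ▸ hx)).elim
      · rintro ⟨x, hx, h0, h⟩
        refine ⟨fun h' => hu1 ?_, x, hx, h⟩
        have e := h0.1 h'
        rw [← e] at hx; exact hx
    · intro x hx
      simp [hx]
  · rw [family_meas hp₀ hμ (N u ∪ N v) {()} (fun _ => ∅) (by simp) (by simp) 0 (by simp)]
    · simp [hUc]
    · intro ω
      rw [Set.mem_inter_iff, hW, hW]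
      simp only [Finset.mem_union]
      constructor
      · rintro ⟨⟨-, h1⟩, -, h2⟩
        refine ⟨(), by simp, fun x hx => ?_⟩
        rcases hx with hx | hx
        · simpa using h1 x hx
        · simpa using h2 x hx
      · rintro ⟨-, -, h⟩
        have h' : ∀ x, x ∈ N u ∨ x ∈ N v → ω x 0 ≠ true := fun x hx => by simpa using h x hx
        exact ⟨⟨h' u (Or.inr huNv), fun b hb => h' b (Or.inl hb)⟩,
          h' v (Or.inl hvNu), fun b hb => h' b (Or.inr hb)⟩
  · rw [family_meas hp₀ hμ (N u ∪ N v) ((N u).erase v) (fun x => {x}) (by simp) ?_ 1 (by simp)]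
    · rw [Finset.card_erase_of_mem hvNu, hNc, hUc, Nat.cast_sub hr]; push_cast; ring
    · intro ω
      rw [Set.mem_inter_iff, hW, hB]
      simp only [Finset.mem_singleton, Finset.mem_union, Finset.mem_erase]
      constructor
      · rintro ⟨⟨h0, x, hx, h⟩, h1, h2⟩
        refine ⟨x, ⟨?_, hx⟩, ?_⟩
        · rintro rfl; exact h1 ((h _ hx).2 rfl)
        · rintro y (hy | hy)
          · exact h y hy
          · refine ⟨fun h' => (h2 y hy h').elim, ?_⟩
            rintro rfl
            exact (Finset.disjoint_left.1 hdisj hx hy).elim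
      · rintro ⟨x, ⟨hxv, hx⟩, h⟩
        have h2 : ∀ y ∈ N v, ω y 0 ≠ true := by
          intro y hy h'
          obtain rfl := (h y (Or.inr hy)).1 h'
          exact Finset.disjoint_left.1 hdisj hx hy
        exact ⟨⟨h2 u huNv, x, hx, fun b hb => h b (Or.inl hb)⟩,
          fun h' => hxv ((h v (Or.inl hvNu)).1 h').symm, h2⟩
    · intro x hx
      simp [Finset.mem_of_mem_erase hx]
  · have hd : ∀ {x y}, x ∈ N u → y ∈ N v → x ≠ y := by
      rintro x y hx hy rfl
      exact Finset.disjoint_left.1 hdisj hx hy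
    rw [family_meas hp₀ hμ (N u ∪ N v) ((N u).erase v ×ˢ (N v).erase u)
      (fun x => {x.1, x.2}) ?_ ?_ 2 ?_]
    · rw [Finset.card_product, Finset.card_erase_of_mem hvNu, Finset.card_erase_of_mem huNv,
        hNc, hNc, hUc, Nat.cast_mul, Nat.cast_sub hr]; push_cast; ring
    · intro ω
      rw [Set.mem_inter_iff, hB, hB]
      simp only [Finset.mem_insert, Finset.mem_singleton, Finset.mem_union, Finset.mem_product,
        Finset.mem_erase, Prod.exists]
      constructor
      · rintro ⟨⟨h0, x, hx, h⟩, h1, y, hy, h'⟩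
        refine ⟨x, y, ⟨⟨?_, hx⟩, ?_, hy⟩, ?_⟩
        · rintro rfl; exact h1 ((h _ hx).2 rfl)
        · rintro rfl; exact h0 ((h' _ hy).2 rfl)
        · rintro z (hz | hz)
          · simp [h z hz, hd hz hy]
          · simp [h' z hz, (hd hx hz).symm]
      · rintro ⟨x, y, ⟨⟨hxv, hx⟩, hyu, hy⟩, h⟩
        have e1 : ∀ b ∈ N u, (ω b 0 = true ↔ b = x) := fun b hb => by
          simp [h b (Or.inl hb), hd hb hy]
        have e2 : ∀ b ∈ N v, (ω b 0 = true ↔ b = y) := fun b hb => by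
          simp [h b (Or.inr hb), (hd hx hb).symm]
        exact ⟨⟨fun h' => hyu ((e2 u huNv).1 h').symm, x, hx, e1⟩,
          fun h' => hxv ((e1 v hvNu).1 h').symm, y, hy, e2⟩
    · rintro ⟨x, y⟩ hxy ⟨x', y'⟩ hxy' he
      simp only [Finset.coe_product, Set.mem_prod, Finset.mem_coe, Finset.mem_erase] at hxy hxy'
      change ({x, y} : Finset V) = {x', y'} at he
      have m1 : x ∈ ({x', y'} : Finset V) := by rw [← he]; simp
      have m2 : y ∈ ({x', y'} : Finset V) := by rw [← he]; simp
      simp only [Finset.mem_insert, Finset.mem_singleton] at m1 m2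
      have a1 := m1.resolve_right (hd hxy.1.2 hxy'.2.2)
      have a2 := m2.resolve_left (hd hxy'.1.2 hxy.2.2).symm
      rw [a1, a2]
    · rintro ⟨x, y⟩ hxy
      simp only [Finset.mem_product, Finset.mem_erase] at hxy
      intro z hz
      simp only [Finset.mem_insert, Finset.mem_singleton] at hz
      rcases hz with rfl | rfl
      · exact Finset.mem_union_left _ hxy.1.2
      · exact Finset.mem_union_right _ hxy.2.2
    · rintro ⟨x, y⟩ hxy
      simp only [Finset.mem_product, Finset.mem_erase] at hxy
      exact Finset.card_pair (hd hxy.1.2 hxy.2.2)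

end InducedForest
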